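/- arXiv:2208.06218 — 4 statements merged into one kernel-verified Lean document; each statement's English description precedes it below -/
import Mathlib

section
/- Let X be a real n×p matrix (n ≥ p) whose Gram matrix XᵀX is invertible and symmetric, let u = x_{i_m} ∈ ℝᵖ be the i_m-th row of X (viewed as a column vector), let x_j ∈ ℝᵖ, and let X̃ be the matrix obtained from X by replacing the row x_{i_m}ᵀ with x_jᵀ. Define A = (uᵀ(XᵀX)⁻¹x_j)·(x_j uᵀ + u x_jᵀ) + (1 − uᵀ(XᵀX)⁻¹u)·x_j x_jᵀ − (1 + x_jᵀ(XᵀX)⁻¹x_j)·u uᵀ and d = (1 − uᵀ(XᵀX)⁻¹u)(1 + x_jᵀ(XᵀX)⁻¹x_j) + (uᵀ(XᵀX)⁻¹x_j)². If d ≠ 0, then X̃ᵀX̃ is invertible and (X̃ᵀX̃)⁻¹ = (XᵀX)⁻¹ − (XᵀX)⁻¹ (A/d) (XᵀX)⁻¹; consequently the leverage of x_j in the exchanged sample is h_{i_m i_m}(x_j) = x_jᵀ[(XᵀX)⁻¹ − (XᵀX)⁻¹ (A/d) (XᵀX)⁻¹] x_j. -/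
open Matrix

lemma vmv_mul_aux {p : ℕ} (H : Matrix (Fin p) (Fin p) ℝ) (w x y z : Fin p → ℝ) :
    vecMulVec w x * H * vecMulVec y z = (x ⬝ᵥ (H *ᵥ y)) • vecMulVec w z := by
  rw [vecMulVec_mul, vecMulVec_mul_vecMulVec, dotProduct_mulVec]
  ext i j
  simp [vecMulVec_apply]
  try ring

lemma gram_exchange_aux {n p : ℕ} (X : Matrix (Fin n) (Fin p) ℝ) (im : Fin n) (v : Fin p → ℝ) :
    (X.updateRow im v)ᵀ * (X.updateRow im v)
      = Xᵀ * X - vecMulVec (X im) (X im) + vecMulVec v v := by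
  ext i j
  simp only [mul_apply, transpose_apply, Matrix.add_apply, Matrix.sub_apply, vecMulVec_apply]
  rw [← Finset.add_sum_erase _ _ (Finset.mem_univ im),
    ← Finset.add_sum_erase (a := im) _ (fun k => X k i * X k j) (Finset.mem_univ im)]
  have : ∑ k ∈ Finset.univ.erase im, X.updateRow im v k i * X.updateRow im v k j
      = ∑ k ∈ Finset.univ.erase im, X k i * X k j := by
    apply Finset.sum_congr rfl
    intro k hk
    rw [updateRow_ne (Finset.ne_of_mem_erase hk)]
  rw [this, updateRow_self]
  ring

/-- Paper's Theorem 1: rank-two update of the inverse Gram matrix after a one-point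
exchange.  If `X̃` is obtained from `X` (with `n ≥ p` and invertible symmetric Gram
matrix `XᵀX`) by replacing the row `u = x_{i_m}` with `x_j`, and `d ≠ 0`, then `X̃ᵀX̃`
is invertible, `(X̃ᵀX̃)⁻¹ = (XᵀX)⁻¹ − (XᵀX)⁻¹ (A/d) (XᵀX)⁻¹`, and the leverage of
`x_j` in the exchanged sample is `x_jᵀ (X̃ᵀX̃)⁻¹ x_j` with this expression. -/
theorem inv_gram_exchange {n p : ℕ} (hnp : p ≤ n) (X : Matrix (Fin n) (Fin p) ℝ)
    (im : Fin n) (xj : Fin p → ℝ)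
    (hinv : IsUnit (Xᵀ * X)) (hsymm : (Xᵀ * X).IsSymm)
    (u : Fin p → ℝ) (hu : u = X im)
    (Xtilde : Matrix (Fin n) (Fin p) ℝ) (hXt : Xtilde = X.updateRow im xj)
    (A : Matrix (Fin p) (Fin p) ℝ)
    (hA : A = (u ⬝ᵥ ((Xᵀ * X)⁻¹ *ᵥ xj)) • (vecMulVec xj u + vecMulVec u xj)
        + (1 - u ⬝ᵥ ((Xᵀ * X)⁻¹ *ᵥ u)) • vecMulVec xj xj
        - (1 + xj ⬝ᵥ ((Xᵀ * X)⁻¹ *ᵥ xj)) • vecMulVec u u)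
    (d : ℝ)
    (hd : d = (1 - u ⬝ᵥ ((Xᵀ * X)⁻¹ *ᵥ u)) * (1 + xj ⬝ᵥ ((Xᵀ * X)⁻¹ *ᵥ xj))
        + (u ⬝ᵥ ((Xᵀ * X)⁻¹ *ᵥ xj)) ^ 2)
    (hd0 : d ≠ 0) :
    IsUnit (Xtildeᵀ * Xtilde) ∧
      (Xtildeᵀ * Xtilde)⁻¹
        = (Xᵀ * X)⁻¹ - (Xᵀ * X)⁻¹ * (d⁻¹ • A) * (Xᵀ * X)⁻¹ ∧
      xj ⬝ᵥ ((Xtildeᵀ * Xtilde)⁻¹ *ᵥ xj)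
        = xj ⬝ᵥ (((Xᵀ * X)⁻¹ - (Xᵀ * X)⁻¹ * (d⁻¹ • A) * (Xᵀ * X)⁻¹) *ᵥ xj) := by
  have hdet : IsUnit (Xᵀ * X).det := (Matrix.isUnit_iff_isUnit_det _).1 hinv
  have hG : Xtildeᵀ * Xtilde = Xᵀ * X - vecMulVec u u + vecMulVec xj xj := by
    rw [hXt, hu, gram_exchange_aux]
  have hHs : ((Xᵀ * X)⁻¹)ᵀ = (Xᵀ * X)⁻¹ := by
    rw [transpose_nonsing_inv, hsymm.eq]
  have hGH : (Xᵀ * X) * (Xᵀ * X)⁻¹ = 1 := mul_nonsing_inv _ hdet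
  rw [hG]
  clear hG
  generalize (Xᵀ * X)⁻¹ = H at *
  generalize Xᵀ * X = G at *
  have hc : xj ⬝ᵥ (H *ᵥ u) = u ⬝ᵥ (H *ᵥ xj) := by
    rw [dotProduct_mulVec, ← mulVec_transpose, hHs, dotProduct_comm]
  have key : (vecMulVec xj xj - vecMulVec u u) * H * A
      = d • (vecMulVec xj xj - vecMulVec u u) - A := by
    rw [hA]
    simp only [sub_mul, mul_sub, mul_add, Matrix.mul_smul, vmv_mul_aux, hc]
    rw [hd]
    module
  have hmul : (G - vecMulVec u u + vecMulVec xj xj) * (H - H * (d⁻¹ • A) * H) = 1 := by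
    have e : G - vecMulVec u u + vecMulVec xj xj = G + (vecMulVec xj xj - vecMulVec u u) := by
      abel
    rw [e]
    generalize vecMulVec xj xj - vecMulVec u u = E at *
    have h1 : (G + E) * (H - H * (d⁻¹ • A) * H)
        = G * H + E * H - d⁻¹ • ((G * H) * A * H) - d⁻¹ • ((E * H * A) * H) := by
      simp only [Matrix.mul_smul, Matrix.smul_mul, add_mul, mul_sub, Matrix.mul_assoc, smul_add]
      abel
    rw [h1, key, hGH, sub_mul, Matrix.smul_mul, smul_sub, smul_smul, inv_mul_cancel₀ hd0,
      one_smul, one_mul]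
    abel
  have hinv2 := inv_eq_right_inv hmul
  refine ⟨IsUnit.of_mul_eq_one _ hmul, hinv2, by rw [hinv2]⟩
end

section
/- Let M be an invertible symmetric real p×p matrix and let u, v ∈ ℝᵖ. Then det(M − uuᵀ + vvᵀ) = d · det(M), where d = (1 − uᵀM⁻¹u)(1 + vᵀM⁻¹v) + (uᵀM⁻¹v)². In particular, M − uuᵀ + vvᵀ is invertible if and only if d ≠ 0. -/
open Matrix

/-- Rank-two determinant update: for an invertible symmetric real `p×p` matrix `M` and
vectors `u, v`, `det(M − uuᵀ + vvᵀ) = d · det M` with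
`d = (1 − uᵀM⁻¹u)(1 + vᵀM⁻¹v) + (uᵀM⁻¹v)²`; in particular `M − uuᵀ + vvᵀ` is
invertible iff `d ≠ 0`. -/
theorem det_rank_two_exchange {p : ℕ} (M : Matrix (Fin p) (Fin p) ℝ)
    (hM : IsUnit M) (hsymm : M.IsSymm) (u v : Fin p → ℝ)
    (d : ℝ)
    (hd : d = (1 - u ⬝ᵥ (M⁻¹ *ᵥ u)) * (1 + v ⬝ᵥ (M⁻¹ *ᵥ v))
        + (u ⬝ᵥ (M⁻¹ *ᵥ v)) ^ 2) :
    (M - vecMulVec u u + vecMulVec v v).det = d * M.det ∧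
      (IsUnit (M - vecMulVec u u + vecMulVec v v) ↔ d ≠ 0) := by
  have hdet : IsUnit M.det := (Matrix.isUnit_iff_isUnit_det M).1 hM
  have hs : v ⬝ᵥ (M⁻¹ *ᵥ u) = u ⬝ᵥ (M⁻¹ *ᵥ v) := by
    have hT : (M⁻¹)ᵀ = M⁻¹ := by rw [Matrix.transpose_nonsing_inv, hsymm.eq]
    rw [Matrix.dotProduct_mulVec, ← Matrix.mulVec_transpose, hT, dotProduct_comm]
  have key : (M - vecMulVec u u + vecMulVec v v).det = d * M.det := by
    let B : Matrix (Fin 2) (Fin p) ℝ := Matrix.of ![u, v]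
    let A : Matrix (Fin p) (Fin 2) ℝ := (Matrix.of ![-u, v])ᵀ
    let C : Matrix (Fin p) (Fin 2) ℝ := (Matrix.of ![-(M⁻¹ *ᵥ u), M⁻¹ *ᵥ v])ᵀ
    have hC : M * C = A := by
      have h1 : ∀ w : Fin p → ℝ, M *ᵥ (M⁻¹ *ᵥ w) = w := fun w => by
        rw [Matrix.mulVec_mulVec, Matrix.mul_nonsing_inv _ hdet, Matrix.one_mulVec]
      ext i j
      fin_cases j
      · change (M *ᵥ (-(M⁻¹ *ᵥ u))) i = (-u) i
        rw [Matrix.mulVec_neg, h1]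
      · change (M *ᵥ (M⁻¹ *ᵥ v)) i = v i
        rw [h1]
    have hE : M - vecMulVec u u + vecMulVec v v = M * (1 + C * B) := by
      rw [Matrix.mul_add, Matrix.mul_one, ← Matrix.mul_assoc, hC]
      ext i j
      simp [A, B, Matrix.mul_apply, Fin.sum_univ_two, vecMulVec_apply]
      ring
    have h00 : (B * C) 0 0 = u ⬝ᵥ (-(M⁻¹ *ᵥ u)) := rfl
    have h01 : (B * C) 0 1 = u ⬝ᵥ (M⁻¹ *ᵥ v) := rfl
    have h10 : (B * C) 1 0 = v ⬝ᵥ (-(M⁻¹ *ᵥ u)) := rfl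
    have h11 : (B * C) 1 1 = v ⬝ᵥ (M⁻¹ *ᵥ v) := rfl
    rw [hE, Matrix.det_mul, Matrix.det_one_add_mul_comm, Matrix.det_fin_two]
    simp only [Matrix.add_apply, h00, h01, h10, h11, dotProduct_neg, hs, hd]
    simp
    ring
  refine ⟨key, ?_⟩
  rw [Matrix.isUnit_iff_isUnit_det, key, isUnit_iff_ne_zero, mul_ne_zero_iff]
  exact ⟨fun h => h.1, fun h => ⟨h, hdet.ne_zero⟩⟩
end

section
/- Let X be a real n×p matrix with XᵀX invertible, Y ∈ ℝⁿ, and let β̂ = (XᵀX)⁻¹XᵀY be the OLS estimator. Fix an index i, let x_i ∈ ℝᵖ be the i-th row of X, h_{ii} = x_iᵀ(XᵀX)⁻¹x_i its leverage, and e_i = Y_i − x_iᵀβ̂ its residual. Let X_{(i)} and Y_{(i)} be obtained by deleting row i from X and entry i from Y, and assume h_{ii} ≠ 1 (so X_{(i)}ᵀX_{(i)} is invertible), with β̂_{(i)} = (X_{(i)}ᵀX_{(i)})⁻¹X_{(i)}ᵀY_{(i)}. Then β̂ − β̂_{(i)} = (XᵀX)⁻¹ x_i · e_i/(1 − h_{ii}).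 -/
open Matrix

/-- Leave-one-out OLS coefficient formula: with `β̂` the OLS estimator, `h = hᵢᵢ` the
leverage of row `i`, `e = eᵢ` its residual, and `β̂₍ᵢ₎` the OLS estimator after deleting
observation `i`, one has `β̂ − β̂₍ᵢ₎ = (XᵀX)⁻¹ xᵢ · eᵢ/(1 − hᵢᵢ)`. -/
theorem ols_leave_one_out_coeff {n p : ℕ} (X : Matrix (Fin (n + 1)) (Fin p) ℝ)
    (Y : Fin (n + 1) → ℝ) (hX : IsUnit (Xᵀ * X)) (i : Fin (n + 1))
    (βhat : Fin p → ℝ) (hβ : βhat = (Xᵀ * X)⁻¹ *ᵥ (Xᵀ *ᵥ Y))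
    (h : ℝ) (hh : h = X i ⬝ᵥ ((Xᵀ * X)⁻¹ *ᵥ X i)) (hh1 : h ≠ 1)
    (e : ℝ) (he : e = Y i - X i ⬝ᵥ βhat)
    (Xi : Matrix (Fin n) (Fin p) ℝ) (hXi : Xi = X.submatrix i.succAbove id)
    (Yi : Fin n → ℝ) (hYi : Yi = Y ∘ i.succAbove)
    (βi : Fin p → ℝ) (hβi : βi = (Xiᵀ * Xi)⁻¹ *ᵥ (Xiᵀ *ᵥ Yi)) :
    βhat - βi = (e / (1 - h)) • ((Xᵀ * X)⁻¹ *ᵥ X i) := by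
  have hdet := (Matrix.isUnit_iff_isUnit_det _).1 hX
  have hG : ∀ v, (Xᵀ * X) *ᵥ v = (Xiᵀ * Xi) *ᵥ v + (X i ⬝ᵥ v) • X i := by
    intro v
    rw [← Matrix.mulVec_mulVec, ← Matrix.mulVec_mulVec]
    ext j
    subst hXi
    simp only [Matrix.mulVec, dotProduct, Matrix.transpose_apply, Pi.add_apply, Pi.smul_apply,
      smul_eq_mul, Matrix.submatrix_apply, id]
    rw [Fin.sum_univ_succAbove _ i]
    ring
  have hY : Xᵀ *ᵥ Y = Xiᵀ *ᵥ Yi + Y i • X i := by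
    ext j
    subst hXi hYi
    simp only [Matrix.mulVec, dotProduct, Matrix.transpose_apply, Pi.add_apply, Pi.smul_apply,
      smul_eq_mul, Matrix.submatrix_apply, id, Function.comp]
    rw [Fin.sum_univ_succAbove _ i]
    ring
  have hGi : ∀ v, (Xᵀ * X) *ᵥ ((Xᵀ * X)⁻¹ *ᵥ v) = v := by
    intro v
    rw [Matrix.mulVec_mulVec, Matrix.mul_nonsing_inv _ hdet, Matrix.one_mulVec]
  have hiG : ∀ v, (Xᵀ * X)⁻¹ *ᵥ ((Xᵀ * X) *ᵥ v) = v := by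
    intro v
    rw [Matrix.mulVec_mulVec, Matrix.nonsing_inv_mul _ hdet, Matrix.one_mulVec]
  have h1 : 1 - h ≠ 0 := sub_ne_zero.2 (Ne.symm hh1)
  have hB : IsUnit (Xiᵀ * Xi) := by
    rw [← Matrix.mulVec_injective_iff_isUnit]
    intro a b hab
    have h0 : (Xiᵀ * Xi) *ᵥ (a - b) = 0 := by
      rw [Matrix.mulVec_sub]; exact sub_eq_zero.2 hab
    have h2 := hG (a - b)
    rw [h0, zero_add] at h2
    have h3 := hiG (a - b)
    rw [h2, Matrix.mulVec_smul] at h3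
    have h4 := congrArg (fun v => X i ⬝ᵥ v) h3
    simp only [dotProduct_smul, smul_eq_mul, ← hh] at h4
    have h5 : X i ⬝ᵥ (a - b) = 0 := by
      have : (X i ⬝ᵥ (a - b)) * (1 - h) = 0 := by linarith
      exact (mul_eq_zero.1 this).resolve_right h1
    rw [h5, zero_smul] at h3
    exact sub_eq_zero.1 h3.symm
  have hBdet := (Matrix.isUnit_iff_isUnit_det _).1 hB
  have hw := hG ((Xᵀ * X)⁻¹ *ᵥ X i)
  rw [hGi, ← hh] at hw
  have hb := hG βhat
  have hb' : (Xᵀ * X) *ᵥ βhat = Xᵀ *ᵥ Y := by rw [hβ, hGi]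
  rw [hb', hY] at hb
  have key : Xiᵀ *ᵥ Yi = (Xiᵀ * Xi) *ᵥ (βhat - (e / (1 - h)) • ((Xᵀ * X)⁻¹ *ᵥ X i)) := by
    rw [Matrix.mulVec_sub, Matrix.mulVec_smul]
    ext j
    have hwj := congrFun hw j
    have hbj := congrFun hb j
    simp only [Pi.add_apply, Pi.sub_apply, Pi.smul_apply, smul_eq_mul] at hwj hbj ⊢
    have e1 : ((Xiᵀ * Xi) *ᵥ ((Xᵀ * X)⁻¹ *ᵥ X i)) j = (1 - h) * X i j := by linarith
    rw [e1, ← mul_assoc, div_mul_cancel₀ _ h1, he]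
    linarith
  rw [hβi, key, Matrix.mulVec_mulVec, Matrix.nonsing_inv_mul _ hBdet, Matrix.one_mulVec,
    sub_sub_cancel]
end

section
/- Let X be a real n×p matrix with XᵀX symmetric positive definite, and let u, w ∈ ℝᵖ be two of its rows with leverages h_u = uᵀ(XᵀX)⁻¹u and h_w = wᵀ(XᵀX)⁻¹w. If h_u ≤ h_w, then det(XᵀX − uuᵀ) ≥ det(XᵀX − wwᵀ). In particular, deleting the observation with the smallest leverage maximizes the determinant of the reduced information matrix. -/
open Matrix

theorem det_sub_vecMulVec_aux {p : ℕ} (A : Matrix (Fin p) (Fin p) ℝ) (hA : IsUnit A.det)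
    (u : Fin p → ℝ) :
    (A - vecMulVec u u).det = A.det * (1 - u ⬝ᵥ (A⁻¹ *ᵥ u)) := by
  have h1 : A - vecMulVec u u
      = A * (1 + replicateCol Unit (-(A⁻¹ *ᵥ u)) * replicateRow Unit u) := by
    rw [← vecMulVec_eq, Matrix.mul_add, Matrix.mul_one, mul_vecMulVec, mulVec_neg,
      mulVec_mulVec, Matrix.mul_nonsing_inv A hA, one_mulVec, neg_vecMulVec, sub_eq_add_neg]
  rw [h1, det_mul, det_one_add_replicateCol_mul_replicateRow, dotProduct_neg, ← sub_eq_add_neg]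

/-- Deletion step of the D-optimal exchange algorithm: if `u = X i` and `w = X j` are
two rows of `X` with leverages `h_u ≤ h_w` (with `XᵀX` symmetric positive definite),
then `det(XᵀX − uuᵀ) ≥ det(XᵀX − wwᵀ)`; hence deleting the observation with the
smallest leverage maximizes the determinant of the reduced information matrix. -/
theorem det_delete_monotone_in_leverage {n p : ℕ} (X : Matrix (Fin n) (Fin p) ℝ)
    (hM : (Xᵀ * X).PosDef) (i j : Fin n)
    (u w : Fin p → ℝ) (hu : u = X i) (hw : w = X j)
    (h : u ⬝ᵥ ((Xᵀ * X)⁻¹ *ᵥ u) ≤ w ⬝ᵥ ((Xᵀ * X)⁻¹ *ᵥ w)) :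
    (Xᵀ * X - vecMulVec w w).det ≤ (Xᵀ * X - vecMulVec u u).det := by
  have hd := hM.det_pos
  have hA : IsUnit (Xᵀ * X).det := hd.ne'.isUnit
  rw [det_sub_vecMulVec_aux _ hA, det_sub_vecMulVec_aux _ hA]
  exact mul_le_mul_of_nonneg_left (by linarith) hd.le
end
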